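/- (Decay property of Gowdy spacetimes in areal coordinates.) There exists a constant K > 0, depending only on the solution, such that 𝓔(R) ≤ K/R for all R ≥ R₀. -/

import Mathlib

open Real MeasureTheory Set

/-- Partial derivative with respect to the first (time) variable `R`. -/
noncomputable def pdR (f : ℝ → ℝ → ℝ) (R θ : ℝ) : ℝ := deriv (fun r => f r θ) R

/-- Partial derivative with respect to the second (space) variable `θ`. -/
noncomputable def pdT (f : ℝ → ℝ → ℝ) (R θ : ℝ) : ℝ := deriv (fun t => f R t) θ

/-!
The energy is dissipated only through `∂_R U` and `∂_θ A`:
`𝓔' = -(2 / R) ∫ (∂_R U)² + e^{4U} (∂_θ A)² / (4R²)`. To first order, the virial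
`∫ (U - ⟨U⟩) ∂_R U` and the momentum `∫ ∂_R U` have as derivatives the differences between the
kinetic and the gradient energies of `U` and of `A`, so that adding a small multiple of them,
divided by `R`, to `𝓔` yields dissipation of the full energy. The only obstruction is the cubic
term `∫ (U - ⟨U⟩) e^{4U} ((∂_R A)² - (∂_θ A)²) / (2R²)`; it is at most `2 √(T 𝓔)` times the energy
of `A`, because the oscillation of `U` over a circle of circumference `T` is at most `√(T 𝓔)`.

Since `𝓔` decreases, this bound is uniform in time, and a momentum coefficient that is large
compared with it gives a first decay estimate `𝓔 ≤ K R^{-δ}`. With the coefficients that are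
optimal in the absence of the cubic term, `W = R 𝓔 + ∫ (U - ⟨U⟩) ∂_R U - ½ ∫ ∂_R U` has a
derivative in which all quadratic terms of order `R⁰` cancel, except for a nonpositive one. Up to
a constant added to `W`, this leaves `W' ≤ (2 √(T 𝓔) / R) W`, and the first estimate makes the
coefficient of `W` integrable, so `R 𝓔` is bounded.
-/

open Function Topology

section Gronwall

variable {a : ℝ} {f f' : ℝ → ℝ}

theorem le_mul_exp_of_hasDerivAt_le {φ φ' : ℝ → ℝ} (hf : ∀ x, a ≤ x → HasDerivAt f (f' x) x)
    (hφ : ∀ x, a ≤ x → HasDerivAt φ (φ' x) x) (hle : ∀ x, a ≤ x → f' x ≤ φ' x * f x)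
    {x : ℝ} (hx : a ≤ x) : f x ≤ f a * exp (φ x - φ a) := by
  have hderiv : ∀ y, a ≤ y → HasDerivAt (fun y => f y * exp (-φ y))
      (f' y * exp (-φ y) + f y * (exp (-φ y) * -φ' y)) y := fun y hy =>
    (hf y hy).mul (hφ y hy).neg.exp
  have hanti : AntitoneOn (fun y => f y * exp (-φ y)) (Ici a) := by
    refine antitoneOn_of_hasDerivWithinAt_nonpos (convex_Ici a)
      (fun y hy => (hderiv y hy).continuousAt.continuousWithinAt)
      (fun y hy => (hderiv y (interior_subset hy)).hasDerivWithinAt) fun y hy => ?_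
    have := mul_le_mul_of_nonneg_right (hle y (interior_subset hy)) (exp_pos (-φ y)).le
    linarith
  calc f x = f x * exp (-φ x) * exp (φ x) := by rw [mul_assoc, ← exp_add]; simp
    _ ≤ f a * exp (-φ a) * exp (φ x) :=
        mul_le_mul_of_nonneg_right (hanti self_mem_Ici hx hx) (exp_pos _).le
    _ = f a * exp (φ x - φ a) := by rw [mul_assoc, ← exp_add]; ring_nf

theorem le_of_hasDerivAt_nonpos (hf : ∀ x, a ≤ x → HasDerivAt f (f' x) x)
    (hf' : ∀ x, a ≤ x → f' x ≤ 0) {x : ℝ} (hx : a ≤ x) : f x ≤ f a := by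
  simpa using le_mul_exp_of_hasDerivAt_le hf (fun y _ => hasDerivAt_const y (0 : ℝ))
    (by simpa using hf') hx

theorem le_mul_exp_of_hasDerivAt_le_rpow {c ε : ℝ} (ha : 0 < a) (hc : 0 ≤ c) (hε : 0 < ε)
    (hfa : 0 ≤ f a) (hf : ∀ x, a ≤ x → HasDerivAt f (f' x) x)
    (hle : ∀ x, a ≤ x → f' x ≤ c * x ^ (-ε - 1) * f x) {x : ℝ} (hx : a ≤ x) :
    f x ≤ f a * exp (c / ε * a ^ (-ε)) := by
  have hφ : ∀ y, a ≤ y → HasDerivAt (fun y => -(c / ε) * y ^ (-ε)) (c * y ^ (-ε - 1)) y :=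
    fun y hy => ((hasDerivAt_rpow_const (Or.inl (ha.trans_le hy).ne')).const_mul _).congr_deriv
      (by field_simp)
  have hx0 : 0 ≤ c / ε * x ^ (-ε) :=
    mul_nonneg (div_nonneg hc hε.le) (rpow_nonneg (ha.le.trans hx) _)
  refine (le_mul_exp_of_hasDerivAt_le hf hφ hle hx).trans ?_
  gcongr
  linarith

-- `f + (g + 3 * B) / x` is comparable to `f`, and the constant `3 * B` makes it dominate its error.
theorem exists_le_mul_rpow_of_hasDerivAt_corrected {g g' : ℝ → ℝ} {B δ : ℝ} (ha : 0 < a)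
    (hδ : δ ≤ 1 / 2) (hf : ∀ x, a ≤ x → HasDerivAt f (f' x) x)
    (hg : ∀ x, a ≤ x → HasDerivAt g (g' x) x)
    (hgB : ∀ x, a ≤ x → |g x| ≤ B)
    (hle : ∀ x, a ≤ x → f' x + g' x / x ≤ -δ * f x / x + B / x ^ 2) :
    ∃ K, ∀ x, a ≤ x → f x ≤ K * x ^ (-δ) := by
  set h : ℝ → ℝ := fun x => f x + (g x + 3 * B) / x with h_def
  have hfh : ∀ x, a ≤ x → f x ≤ h x := fun x hx => by
    have : 0 ≤ (g x + 3 * B) / x :=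
      div_nonneg (by linarith [hgB x hx, neg_abs_le (g x), abs_nonneg (g x)]) (ha.le.trans hx)
    simp only [h_def]
    linarith
  have hh : ∀ x, a ≤ x → HasDerivAt h (f' x + (g' x * x - (g x + 3 * B) * 1) / x ^ 2) x :=
    fun x hx => (hf x hx).add
      (((hg x hx).add_const (3 * B)).div (hasDerivAt_id x) (ha.trans_le hx).ne')
  have hlog : ∀ x, a ≤ x → HasDerivAt (fun x => -δ * log x) (-δ * x⁻¹) x := fun x hx =>
    (hasDerivAt_log (ha.trans_le hx).ne').const_mul _
  have hle_h : ∀ x, a ≤ x → f' x + (g' x * x - (g x + 3 * B) * 1) / x ^ 2 ≤ -δ * x⁻¹ * h x := by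
    intro x hx
    have hx0 : 0 < x := ha.trans_le hx
    have hgx := (abs_le.mp (hgB x hx)).1
    have hB : 0 ≤ B := (abs_nonneg _).trans (hgB x hx)
    have hnum : B - (g x + 3 * B) ≤ -δ * (g x + 3 * B) := by nlinarith
    calc f' x + (g' x * x - (g x + 3 * B) * 1) / x ^ 2
        = f' x + g' x / x - (g x + 3 * B) / x ^ 2 := by field_simp; ring
      _ ≤ -δ * f x / x + B / x ^ 2 - (g x + 3 * B) / x ^ 2 := by linarith [hle x hx]
      _ = -δ * f x / x + (B - (g x + 3 * B)) / x ^ 2 := by ring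
      _ ≤ -δ * f x / x + -δ * (g x + 3 * B) / x ^ 2 := by gcongr
      _ = -δ * x⁻¹ * h x := by simp only [h_def]; field_simp; ring
  refine ⟨h a * a ^ δ, fun x hx =>
    (hfh x hx).trans ((le_mul_exp_of_hasDerivAt_le hh hlog hle_h hx).trans_eq ?_)⟩
  rw [rpow_def_of_pos ha, rpow_def_of_pos (ha.trans_le hx), mul_assoc, ← exp_add]
  ring_nf

end Gronwall

section IntervalInequalities

variable {f g : ℝ → ℝ} {a b : ℝ}

theorem sq_integral_le_mul_integral_sq (hab : a ≤ b) (hf : Continuous f) :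
    (∫ x in a..b, f x) ^ 2 ≤ (b - a) * ∫ x in a..b, f x ^ 2 := by
  rcases hab.eq_or_lt with rfl | hlt
  · simp
  have hba : 0 < b - a := sub_pos.mpr hlt
  have jensen : (⨍ x in a..b, f x) ^ 2 ≤ ⨍ x in a..b, f x ^ 2 :=
    even_two.convexOn_pow.map_set_average_le (by fun_prop) isClosed_univ
      (by simp [sub_ne_zero, hlt.ne']) (by simp) (by simp) (hf.intervalIntegrable a b).def'
      ((hf.pow 2).intervalIntegrable a b).def'
  rw [interval_average_eq_div, interval_average_eq_div, div_pow,
    div_le_div_iff₀ (by positivity) hba] at jensen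
  exact le_of_mul_le_mul_right (by linarith) hba

theorem abs_integral_mul_le (hab : a ≤ b) {c : ℝ} (hf : ∀ x ∈ Icc a b, |f x| ≤ c)
    (hg : Continuous g) : |∫ x in a..b, f x * g x| ≤ c * ∫ x in a..b, |g x| := by
  rw [← intervalIntegral.integral_const_mul]
  refine intervalIntegral.norm_integral_le_of_norm_le (E := ℝ) hab (.of_forall fun x hx => ?_)
    ((hg.abs.const_mul c).intervalIntegrable a b)
  rw [norm_mul, norm_eq_abs, norm_eq_abs]
  exact mul_le_mul_of_nonneg_right (hf x (Ioc_subset_Icc_self hx)) (abs_nonneg _)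

theorem integral_abs_le_sqrt_mul_integral_sq (hab : a ≤ b) (hf : Continuous f) :
    ∫ x in a..b, |f x| ≤ √((b - a) * ∫ x in a..b, f x ^ 2) :=
  le_sqrt_of_sq_le (by simpa only [sq_abs] using sq_integral_le_mul_integral_sq hab hf.abs)

theorem abs_sub_le_sqrt_mul_integral_deriv_sq {f' : ℝ → ℝ}
    (hf : ∀ x, HasDerivAt f (f' x) x) (hf' : Continuous f') {x y : ℝ} (hx : x ∈ Icc a b)
    (hy : y ∈ Icc a b) : |f x - f y| ≤ √((b - a) * ∫ t in a..b, f' t ^ 2) := by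
  wlog hyx : y ≤ x generalizing x y
  · rw [abs_sub_comm]
    exact this hy hx (le_of_not_ge hyx)
  have hsub : ∫ t in y..x, f' t ^ 2 ≤ ∫ t in a..b, f' t ^ 2 :=
    intervalIntegral.integral_mono_interval hy.1 hyx hx.2 (.of_forall fun _ => sq_nonneg _)
      ((hf'.pow 2).intervalIntegrable a b)
  rw [← intervalIntegral.integral_eq_sub_of_hasDerivAt (fun t _ => hf t)
    (hf'.intervalIntegrable y x)]
  refine abs_le_sqrt ((sq_integral_le_mul_integral_sq hyx hf').trans ?_)
  exact mul_le_mul (by linarith [hx.2, hy.1]) hsub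
    (intervalIntegral.integral_nonneg hyx fun _ _ => sq_nonneg _) (by linarith [hx.1, hx.2])

theorem abs_sub_average_le_sqrt_mul_integral_deriv_sq {f' : ℝ → ℝ} (hab : a < b)
    (hf : ∀ x, HasDerivAt f (f' x) x) (hf' : Continuous f') {x : ℝ} (hx : x ∈ Icc a b) :
    |f x - ⨍ t in a..b, f t| ≤ √((b - a) * ∫ t in a..b, f' t ^ 2) := by
  have hcont : Continuous f := continuous_iff_continuousAt.mpr fun t => (hf t).continuousAt
  obtain ⟨y, hy, hfy⟩ := exists_eq_interval_average hab.ne hcont.continuousOn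
  rw [uIoo_of_lt hab] at hy
  rw [← hfy]
  exact abs_sub_le_sqrt_mul_integral_deriv_sq hf hf' hx (Ioo_subset_Icc_self hy)

end IntervalInequalities

section PartialDerivatives

variable {f : ℝ → ℝ → ℝ} {m n : WithTop ℕ∞} {R θ c : ℝ}

theorem hasDerivAt_fst_of_differentiableAt (hf : DifferentiableAt ℝ (uncurry f) (R, θ)) :
    HasDerivAt (fun r => f r θ) (fderiv ℝ (uncurry f) (R, θ) (1, 0)) R :=
  hf.hasFDerivAt.comp_hasDerivAt (f := fun r => (r, θ)) R
    ((hasDerivAt_id R).prodMk (hasDerivAt_const R θ))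

theorem hasDerivAt_snd_of_differentiableAt (hf : DifferentiableAt ℝ (uncurry f) (R, θ)) :
    HasDerivAt (fun t => f R t) (fderiv ℝ (uncurry f) (R, θ) (0, 1)) θ :=
  hf.hasFDerivAt.comp_hasDerivAt (f := fun t => (R, t)) θ
    ((hasDerivAt_const θ R).prodMk (hasDerivAt_id θ))

theorem contDiff_apply_of_uncurry (hf : ContDiff ℝ n (uncurry f)) (R : ℝ) : ContDiff ℝ n (f R) :=
  hf.comp (contDiff_prodMk_right R)

theorem hasDerivAt_pdR (hf : Differentiable ℝ (uncurry f)) (R θ : ℝ) :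
    HasDerivAt (fun r => f r θ) (pdR f R θ) R :=
  (hasDerivAt_fst_of_differentiableAt (hf (R, θ))).differentiableAt.hasDerivAt

theorem hasDerivAt_pdT (hf : Differentiable ℝ (uncurry f)) (R θ : ℝ) :
    HasDerivAt (fun t => f R t) (pdT f R θ) θ :=
  (hasDerivAt_snd_of_differentiableAt (hf (R, θ))).differentiableAt.hasDerivAt

theorem uncurry_pdR (hf : Differentiable ℝ (uncurry f)) :
    uncurry (pdR f) = fun p => fderiv ℝ (uncurry f) p (1, 0) :=
  funext fun p => (hasDerivAt_fst_of_differentiableAt (hf p)).deriv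

theorem uncurry_pdT (hf : Differentiable ℝ (uncurry f)) :
    uncurry (pdT f) = fun p => fderiv ℝ (uncurry f) p (0, 1) :=
  funext fun p => (hasDerivAt_snd_of_differentiableAt (hf p)).deriv

theorem contDiff_pdR (hf : ContDiff ℝ n (uncurry f)) (hmn : m + 1 ≤ n) :
    ContDiff ℝ m (uncurry (pdR f)) := by
  rw [uncurry_pdR ((hf.of_le (le_add_self.trans hmn)).differentiable one_ne_zero)]
  exact (hf.fderiv_right hmn).clm_apply contDiff_const

theorem contDiff_pdT (hf : ContDiff ℝ n (uncurry f)) (hmn : m + 1 ≤ n) :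
    ContDiff ℝ m (uncurry (pdT f)) := by
  rw [uncurry_pdT ((hf.of_le (le_add_self.trans hmn)).differentiable one_ne_zero)]
  exact (hf.fderiv_right hmn).clm_apply contDiff_const

theorem pdR_pdT_comm (hf : ContDiff ℝ 2 (uncurry f)) (R θ : ℝ) :
    pdR (pdT f) R θ = pdT (pdR f) R θ := by
  have hdf : Differentiable ℝ (uncurry f) := hf.differentiable two_ne_zero
  have hd2f : DifferentiableAt ℝ (fderiv ℝ (uncurry f)) (R, θ) :=
    (hf.fderiv_right (m := 1) one_add_one_eq_two.le).differentiable one_ne_zero _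
  have hRT : pdR (pdT f) R θ = fderiv ℝ (fderiv ℝ (uncurry f)) (R, θ) (1, 0) (0, 1) := by
    refine (hasDerivAt_fst_of_differentiableAt ?_).deriv.trans ?_ <;> rw [uncurry_pdT hdf]
    · fun_prop
    · rw [fderiv_clm_apply hd2f (by fun_prop)]
      simp
  have hTR : pdT (pdR f) R θ = fderiv ℝ (fderiv ℝ (uncurry f)) (R, θ) (0, 1) (1, 0) := by
    refine (hasDerivAt_snd_of_differentiableAt ?_).deriv.trans ?_ <;> rw [uncurry_pdR hdf]
    · fun_prop
    · rw [fderiv_clm_apply hd2f (by fun_prop)]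
      simp
  rw [hRT, hTR]
  exact hf.contDiffAt.isSymmSndFDerivAt (by simp) _ _

theorem periodic_pdR (hf : ∀ R, Periodic (f R) c) (R : ℝ) : Periodic (pdR f R) c := fun θ => by
  simp only [pdR, hf _ θ]

theorem periodic_pdT (hf : ∀ R, Periodic (f R) c) (R : ℝ) : Periodic (pdT f R) c := fun θ => by
  rw [pdT, ← deriv_comp_add_const]
  simp only [hf R _, pdT]

end PartialDerivatives

section BalanceLaw

variable {F : ℝ → ℝ → ℝ} {s : Set ℝ} {R a b : ℝ}

theorem hasDerivAt_integral_pdR (hs : IsOpen s) (hR : R ∈ s)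
    (hF : ContDiffOn ℝ 1 (uncurry F) (s ×ˢ univ)) :
    HasDerivAt (fun r => ∫ θ in a..b, F r θ) (∫ θ in a..b, pdR F R θ) R := by
  have hopen : IsOpen (s ×ˢ (univ : Set ℝ)) := hs.prod isOpen_univ
  have hdiff : ∀ r ∈ s, ∀ θ, DifferentiableAt ℝ (uncurry F) (r, θ) := fun r hr θ =>
    (hF.differentiableOn one_ne_zero).differentiableAt (hopen.mem_nhds ⟨hr, mem_univ θ⟩)
  have hpdR : ∀ r ∈ s, ∀ θ, HasDerivAt (fun r => F r θ) (pdR F r θ) r := fun r hr θ =>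
    (hasDerivAt_fst_of_differentiableAt (hdiff r hr θ)).differentiableAt.hasDerivAt
  have hpdR_cont : ContinuousOn (uncurry (pdR F)) (s ×ˢ univ) :=
    ((hF.continuousOn_fderiv_of_isOpen hopen le_rfl).clm_apply continuousOn_const).congr
      fun p hp => (hasDerivAt_fst_of_differentiableAt (hdiff p.1 hp.1 p.2)).deriv
  have hslice : ∀ {H : ℝ → ℝ → ℝ}, ContinuousOn (uncurry H) (s ×ˢ univ) →
      ∀ r ∈ s, Continuous (H r) := fun hH r hr =>
    hH.comp_continuous (Continuous.prodMk_right r) fun θ => ⟨hr, mem_univ θ⟩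
  obtain ⟨k, hk, hks, hk_compact⟩ := local_compact_nhds (hs.mem_nhds hR)
  obtain ⟨B, hB⟩ := (hk_compact.prod isCompact_uIcc).exists_bound_of_continuousOn
    (hpdR_cont.mono (prod_mono hks (subset_univ (uIcc a b))))
  exact (intervalIntegral.hasDerivAt_integral_of_dominated_loc_of_deriv_le
    (bound := fun _ => B) hk
    (Filter.eventually_of_mem hk fun r hr =>
      (hslice hF.continuousOn r (hks hr)).aestronglyMeasurable)
    ((hslice hF.continuousOn R hR).intervalIntegrable a b)
    (hslice hpdR_cont R hR).aestronglyMeasurable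
    (.of_forall fun θ hθ r hr => hB (r, θ) ⟨hr, uIoc_subset_uIcc hθ⟩)
    intervalIntegrable_const
    (.of_forall fun θ _ r hr => hpdR r (hks hr) θ)).2

theorem hasDerivAt_integral_of_balanceLaw {flux source : ℝ → ℝ} (hs : IsOpen s) (hR : R ∈ s)
    (hF : ContDiffOn ℝ 1 (uncurry F) (s ×ˢ univ)) (hflux : ContDiff ℝ 1 flux)
    (hab : flux b = flux a) (hsource : Continuous source)
    (hlaw : ∀ θ, HasDerivAt (fun r => F r θ) (deriv flux θ + source θ) R) :
    HasDerivAt (fun r => ∫ θ in a..b, F r θ) (∫ θ in a..b, source θ) R := by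
  have hflux' : IntervalIntegrable (deriv flux) volume a b :=
    hflux.continuous_deriv_one.intervalIntegrable a b
  refine (hasDerivAt_integral_pdR hs hR hF).congr_deriv ?_
  calc ∫ θ in a..b, pdR F R θ = ∫ θ in a..b, (deriv flux θ + source θ) := by
        simp only [pdR, (hlaw _).deriv]
    _ = (flux b - flux a) + ∫ θ in a..b, source θ := by
        rw [intervalIntegral.integral_add hflux' (hsource.intervalIntegrable a b),
          intervalIntegral.integral_deriv_eq_sub
            (fun θ _ => hflux.differentiable one_ne_zero θ) hflux']
    _ = ∫ θ in a..b, source θ := by rw [hab, sub_self, zero_add]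

end BalanceLaw

/-- The Gowdy wave equations for areal time `R ≥ R₀`, on a circle of arbitrary circumference `T`.
The unknowns are defined for all times, so that no one-sided derivatives are needed at `R₀`. -/
structure IsGowdySolution (T R₀ : ℝ) (U A : ℝ → ℝ → ℝ) : Prop where
  period_pos : 0 < T
  time_pos : 0 < R₀
  contDiff_U : ContDiff ℝ 2 (uncurry U)
  contDiff_A : ContDiff ℝ 2 (uncurry A)
  periodic_U : ∀ R, Periodic (U R) T
  periodic_A : ∀ R, Periodic (A R) T
  wave_U : ∀ R, R₀ ≤ R → ∀ θ,
    deriv (fun r => r * pdR U r θ) R - deriv (fun t => R * pdT U R t) θ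
      = exp (4 * U R θ) / (2 * R) * ((pdR A R θ) ^ 2 - (pdT A R θ) ^ 2)
  wave_A : ∀ R, R₀ ≤ R → ∀ θ,
    deriv (fun r => r⁻¹ * pdR A r θ) R - deriv (fun t => R⁻¹ * pdT A R t) θ
      = 4 / R * (-(pdR U R θ * pdR A R θ) + pdT U R θ * pdT A R θ)

/-- The weight `e^{4U} / (4R²)` carried by the derivatives of `A` in the energy. -/
noncomputable def twistWeight (U : ℝ → ℝ → ℝ) (R θ : ℝ) : ℝ := exp (4 * U R θ) / (4 * R ^ 2)

/-- The nonlinear term of the equation for `U`, once that is solved for `∂_R² U`. -/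
noncomputable def waveSource (U A : ℝ → ℝ → ℝ) (R θ : ℝ) : ℝ :=
  2 * twistWeight U R θ * (pdR A R θ ^ 2 - pdT A R θ ^ 2)

/-- The density of the energy `𝓔(R)`. -/
noncomputable def energyDensity (U A : ℝ → ℝ → ℝ) (R θ : ℝ) : ℝ :=
  pdR U R θ ^ 2 + pdT U R θ ^ 2 + twistWeight U R θ * (pdR A R θ ^ 2 + pdT A R θ ^ 2)

/-- The flux of energy around the circle. -/
noncomputable def energyFlux (U A : ℝ → ℝ → ℝ) (R θ : ℝ) : ℝ :=
  2 * (pdR U R θ * pdT U R θ) + 2 * (twistWeight U R θ * (pdR A R θ * pdT A R θ))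

/-- The energy `𝓔(R)` of the pair `(U, A)` on the circle at time `R`. -/
noncomputable def gowdyEnergy (T : ℝ) (U A : ℝ → ℝ → ℝ) (R : ℝ) : ℝ :=
  ∫ θ in (0 : ℝ)..T, energyDensity U A R θ

/-- The part of the energy coming from `∂_R U`. -/
noncomputable def kineticU (T : ℝ) (U : ℝ → ℝ → ℝ) (R : ℝ) : ℝ :=
  ∫ θ in (0 : ℝ)..T, pdR U R θ ^ 2

/-- The part of the energy coming from `∂_θ U`. -/
noncomputable def gradientU (T : ℝ) (U : ℝ → ℝ → ℝ) (R : ℝ) : ℝ :=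
  ∫ θ in (0 : ℝ)..T, pdT U R θ ^ 2

/-- The part of the energy coming from `∂_R A`. -/
noncomputable def kineticA (T : ℝ) (U A : ℝ → ℝ → ℝ) (R : ℝ) : ℝ :=
  ∫ θ in (0 : ℝ)..T, twistWeight U R θ * pdR A R θ ^ 2

/-- The part of the energy coming from `∂_θ A`. -/
noncomputable def gradientA (T : ℝ) (U A : ℝ → ℝ → ℝ) (R : ℝ) : ℝ :=
  ∫ θ in (0 : ℝ)..T, twistWeight U R θ * pdT A R θ ^ 2

/-- The mean of `U` over the circle at time `R`. -/
noncomputable def spatialMean (T : ℝ) (U : ℝ → ℝ → ℝ) (R : ℝ) : ℝ := ⨍ θ in (0 : ℝ)..T, U R θ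

/-- The total momentum `∫ ∂_R U dθ`, whose derivative measures the difference between the kinetic
and gradient energies of `A`. -/
noncomputable def momentum (T : ℝ) (U : ℝ → ℝ → ℝ) (R : ℝ) : ℝ := ∫ θ in (0 : ℝ)..T, pdR U R θ

/-- The virial `∫ (U - ⟨U⟩) ∂_R U dθ`, whose derivative measures the difference between the kinetic
and gradient energies of `U`. -/
noncomputable def virial (T : ℝ) (U : ℝ → ℝ → ℝ) (R : ℝ) : ℝ :=
  ∫ θ in (0 : ℝ)..T, (U R θ - spatialMean T U R) * pdR U R θ

/-- The cubic error term produced by the nonlinearity in the derivative of the virial. -/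
noncomputable def virialSource (T : ℝ) (U A : ℝ → ℝ → ℝ) (R : ℝ) : ℝ :=
  ∫ θ in (0 : ℝ)..T, (U R θ - spatialMean T U R) * waveSource U A R θ

/-- The combination of virial and momentum used to correct the energy. The momentum serves to turn
the dissipation of `∂_θ A` into one of `∂_R A`. -/
noncomputable def correctedVirial (T : ℝ) (U : ℝ → ℝ → ℝ) (c R : ℝ) : ℝ :=
  virial T U R - c * momentum T U R

/-- The quantity `√(T 𝓔(R))`, which bounds the oscillation of `U` over the circle at time `R`. -/
noncomputable def oscillationBound (T : ℝ) (U A : ℝ → ℝ → ℝ) (R : ℝ) : ℝ :=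
  √(T * gowdyEnergy T U A R)

/-- A functional comparable to `R 𝓔(R)` whose relative growth rate is integrable. The constant makes
it dominate `R 𝓔(R)` together with the error terms in its derivative. -/
noncomputable def decayFunctional (T R₀ : ℝ) (U A : ℝ → ℝ → ℝ) (R : ℝ) : ℝ :=
  R * gowdyEnergy T U A R + correctedVirial T U (1 / 2) R
    + (oscillationBound T U A R₀ + 1 / 2) * (oscillationBound T U A R₀ + 1)

theorem contDiffOn_twistWeight {U : ℝ → ℝ → ℝ} {n : WithTop ℕ∞} (hU : ContDiff ℝ n (uncurry U)) :
    ContDiffOn ℝ n (uncurry (twistWeight U)) (Ioi 0 ×ˢ univ) := by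
  refine (contDiff_const.mul hU).exp.contDiffOn.div
    (contDiff_const.mul (contDiff_fst.pow 2)).contDiffOn fun p hp => ?_
  have hp₁ : 0 < p.1 := hp.1
  positivity

theorem twistWeight_nonneg (U : ℝ → ℝ → ℝ) (R θ : ℝ) : 0 ≤ twistWeight U R θ := by
  unfold twistWeight
  positivity

theorem hasDerivAt_twistWeight_fst {U : ℝ → ℝ → ℝ} (hU : Differentiable ℝ (uncurry U)) {R : ℝ}
    (hR : R ≠ 0) (θ : ℝ) : HasDerivAt (fun r => twistWeight U r θ)
      (twistWeight U R θ * (4 * pdR U R θ - 2 / R)) R := by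
  refine (((hasDerivAt_pdR hU R θ).const_mul 4).exp.div ((hasDerivAt_pow 2 R).const_mul 4)
    (by positivity)).congr_deriv ?_
  simp only [twistWeight]
  field_simp
  ring

theorem hasDerivAt_twistWeight_snd {U : ℝ → ℝ → ℝ} (hU : Differentiable ℝ (uncurry U))
    (R θ : ℝ) : HasDerivAt (fun t => twistWeight U R t)
      (twistWeight U R θ * (4 * pdT U R θ)) θ := by
  refine (((hasDerivAt_pdT hU R θ).const_mul 4).exp.div_const _).congr_deriv ?_
  simp only [twistWeight]
  ring

section Nonneg

variable {T : ℝ} (hT : 0 ≤ T) (U A : ℝ → ℝ → ℝ) (R : ℝ)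

include hT

theorem kineticU_nonneg : 0 ≤ kineticU T U R :=
  intervalIntegral.integral_nonneg hT fun _ _ => sq_nonneg _

theorem gradientU_nonneg : 0 ≤ gradientU T U R :=
  intervalIntegral.integral_nonneg hT fun _ _ => sq_nonneg _

theorem kineticA_nonneg : 0 ≤ kineticA T U A R :=
  intervalIntegral.integral_nonneg hT fun _ _ =>
    mul_nonneg (twistWeight_nonneg _ _ _) (sq_nonneg _)

theorem gradientA_nonneg : 0 ≤ gradientA T U A R :=
  intervalIntegral.integral_nonneg hT fun _ _ =>
    mul_nonneg (twistWeight_nonneg _ _ _) (sq_nonneg _)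

end Nonneg

namespace IsGowdySolution

variable {T R₀ R : ℝ} {U A : ℝ → ℝ → ℝ}

theorem differentiable_U (h : IsGowdySolution T R₀ U A) : Differentiable ℝ (uncurry U) :=
  h.contDiff_U.differentiable two_ne_zero

theorem contDiff_pdR_U (h : IsGowdySolution T R₀ U A) : ContDiff ℝ 1 (uncurry (pdR U)) :=
  contDiff_pdR h.contDiff_U one_add_one_eq_two.le

theorem contDiff_pdT_U (h : IsGowdySolution T R₀ U A) : ContDiff ℝ 1 (uncurry (pdT U)) :=
  contDiff_pdT h.contDiff_U one_add_one_eq_two.le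

theorem contDiff_pdR_A (h : IsGowdySolution T R₀ U A) : ContDiff ℝ 1 (uncurry (pdR A)) :=
  contDiff_pdR h.contDiff_A one_add_one_eq_two.le

theorem contDiff_pdT_A (h : IsGowdySolution T R₀ U A) : ContDiff ℝ 1 (uncurry (pdT A)) :=
  contDiff_pdT h.contDiff_A one_add_one_eq_two.le

theorem continuous_U (h : IsGowdySolution T R₀ U A) (R : ℝ) : Continuous (U R) :=
  (contDiff_apply_of_uncurry h.contDiff_U R).continuous

theorem continuous_pdR_U (h : IsGowdySolution T R₀ U A) (R : ℝ) : Continuous (pdR U R) :=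
  (contDiff_apply_of_uncurry h.contDiff_pdR_U R).continuous

theorem continuous_pdT_U (h : IsGowdySolution T R₀ U A) (R : ℝ) : Continuous (pdT U R) :=
  (contDiff_apply_of_uncurry h.contDiff_pdT_U R).continuous

theorem continuous_pdR_A (h : IsGowdySolution T R₀ U A) (R : ℝ) : Continuous (pdR A R) :=
  (contDiff_apply_of_uncurry h.contDiff_pdR_A R).continuous

theorem continuous_pdT_A (h : IsGowdySolution T R₀ U A) (R : ℝ) : Continuous (pdT A R) :=
  (contDiff_apply_of_uncurry h.contDiff_pdT_A R).continuous

theorem continuous_twistWeight (h : IsGowdySolution T R₀ U A) (R : ℝ) :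
    Continuous (twistWeight U R) :=
  ((h.continuous_U R).const_mul 4).rexp.div_const _

theorem continuous_waveSource (h : IsGowdySolution T R₀ U A) (R : ℝ) :
    Continuous (waveSource U A R) :=
  ((h.continuous_twistWeight R).const_mul 2).mul
    (((h.continuous_pdR_A R).pow 2).sub ((h.continuous_pdT_A R).pow 2))

theorem hasDerivAt_pdR_U (h : IsGowdySolution T R₀ U A) (hR : R₀ ≤ R) (θ : ℝ) :
    HasDerivAt (fun r => pdR U r θ)
      (pdT (pdT U) R θ - pdR U R θ / R + waveSource U A R θ) R := by
  have hR0 : R ≠ 0 := (h.time_pos.trans_le hR).ne'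
  have hRR := hasDerivAt_pdR (h.contDiff_pdR_U.differentiable one_ne_zero) R θ
  have hTT := hasDerivAt_pdT (h.contDiff_pdT_U.differentiable one_ne_zero) R θ
  have hwave := h.wave_U R hR θ
  rw [((hasDerivAt_id' R).fun_mul hRR).deriv, (hTT.const_mul R).deriv] at hwave
  refine hRR.congr_deriv ?_
  have hsolved : pdR (pdR U) R θ = (R * pdT (pdT U) R θ - pdR U R θ
      + exp (4 * U R θ) / (2 * R) * (pdR A R θ ^ 2 - pdT A R θ ^ 2)) / R := by
    rw [eq_div_iff hR0]
    linarith
  rw [hsolved, waveSource, twistWeight]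
  field_simp
  ring

theorem hasDerivAt_pdR_A (h : IsGowdySolution T R₀ U A) (hR : R₀ ≤ R) (θ : ℝ) :
    HasDerivAt (fun r => pdR A r θ) (pdT (pdT A) R θ + pdR A R θ / R
      - 4 * (pdR U R θ * pdR A R θ - pdT U R θ * pdT A R θ)) R := by
  have hR0 : R ≠ 0 := (h.time_pos.trans_le hR).ne'
  have hRR := hasDerivAt_pdR (h.contDiff_pdR_A.differentiable one_ne_zero) R θ
  have hTT := hasDerivAt_pdT (h.contDiff_pdT_A.differentiable one_ne_zero) R θ
  have hwave := h.wave_A R hR θ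
  rw [((hasDerivAt_inv hR0).fun_mul hRR).deriv, (hTT.const_mul R⁻¹).deriv] at hwave
  refine hRR.congr_deriv ?_
  field_simp at hwave ⊢
  linarith

theorem hasDerivAt_pdT_U (h : IsGowdySolution T R₀ U A) (R θ : ℝ) :
    HasDerivAt (fun r => pdT U r θ) (pdT (pdR U) R θ) R :=
  pdR_pdT_comm h.contDiff_U R θ ▸
    hasDerivAt_pdR (h.contDiff_pdT_U.differentiable one_ne_zero) R θ

theorem hasDerivAt_pdT_A (h : IsGowdySolution T R₀ U A) (R θ : ℝ) :
    HasDerivAt (fun r => pdT A r θ) (pdT (pdR A) R θ) R :=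
  pdR_pdT_comm h.contDiff_A R θ ▸
    hasDerivAt_pdR (h.contDiff_pdT_A.differentiable one_ne_zero) R θ

theorem contDiffOn_energyDensity (h : IsGowdySolution T R₀ U A) :
    ContDiffOn ℝ 1 (uncurry (energyDensity U A)) (Ioi 0 ×ˢ univ) :=
  ((h.contDiff_pdR_U.pow 2).add (h.contDiff_pdT_U.pow 2)).contDiffOn.add
    ((contDiffOn_twistWeight (h.contDiff_U.of_le one_le_two)).mul
      ((h.contDiff_pdR_A.pow 2).add (h.contDiff_pdT_A.pow 2)).contDiffOn)

theorem contDiff_energyFlux (h : IsGowdySolution T R₀ U A) (R : ℝ) :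
    ContDiff ℝ 1 (energyFlux U A R) := by
  have hU := (contDiff_apply_of_uncurry h.contDiff_U R).of_le one_le_two
  have hRU := contDiff_apply_of_uncurry h.contDiff_pdR_U R
  have hTU := contDiff_apply_of_uncurry h.contDiff_pdT_U R
  have hRA := contDiff_apply_of_uncurry h.contDiff_pdR_A R
  have hTA := contDiff_apply_of_uncurry h.contDiff_pdT_A R
  exact (contDiff_const.mul (hRU.mul hTU)).add (contDiff_const.mul
    (((contDiff_const.mul hU).exp.div_const _).mul (hRA.mul hTA)))

theorem energyFlux_period (h : IsGowdySolution T R₀ U A) (R : ℝ) :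
    energyFlux U A R T = energyFlux U A R 0 := by
  simp only [energyFlux, twistWeight, (h.periodic_U R).eq, (periodic_pdR h.periodic_U R).eq,
    (periodic_pdT h.periodic_U R).eq, (periodic_pdR h.periodic_A R).eq,
    (periodic_pdT h.periodic_A R).eq]

theorem hasDerivAt_energyDensity (h : IsGowdySolution T R₀ U A) (hR : R₀ ≤ R) (θ : ℝ) :
    HasDerivAt (fun r => energyDensity U A r θ) (deriv (energyFlux U A R) θ
      + -(2 / R) * (pdR U R θ ^ 2 + twistWeight U R θ * pdT A R θ ^ 2)) R := by
  have hRU := hasDerivAt_pdT (h.contDiff_pdR_U.differentiable one_ne_zero) R θ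
  have hTU := hasDerivAt_pdT (h.contDiff_pdT_U.differentiable one_ne_zero) R θ
  have hRA := hasDerivAt_pdT (h.contDiff_pdR_A.differentiable one_ne_zero) R θ
  have hTA := hasDerivAt_pdT (h.contDiff_pdT_A.differentiable one_ne_zero) R θ
  have hflux : HasDerivAt (energyFlux U A R) _ θ := ((hRU.mul hTU).const_mul 2).add
    (((hasDerivAt_twistWeight_snd h.differentiable_U R θ).mul (hRA.mul hTA)).const_mul 2)
  rw [hflux.deriv]
  refine ((((h.hasDerivAt_pdR_U hR θ).pow 2).add ((h.hasDerivAt_pdT_U R θ).pow 2)).add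
    ((hasDerivAt_twistWeight_fst h.differentiable_U (h.time_pos.trans_le hR).ne' θ).mul
      (((h.hasDerivAt_pdR_A hR θ).pow 2).add ((h.hasDerivAt_pdT_A R θ).pow 2)))).congr_deriv ?_
  simp only [waveSource, Pi.mul_apply, Pi.add_apply, Pi.pow_apply]
  ring

theorem intervalIntegrable_pdR_U_sq (h : IsGowdySolution T R₀ U A) (R : ℝ) :
    IntervalIntegrable (fun θ => pdR U R θ ^ 2) volume 0 T :=
  ((h.continuous_pdR_U R).pow 2).intervalIntegrable 0 T

theorem intervalIntegrable_pdT_U_sq (h : IsGowdySolution T R₀ U A) (R : ℝ) :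
    IntervalIntegrable (fun θ => pdT U R θ ^ 2) volume 0 T :=
  ((h.continuous_pdT_U R).pow 2).intervalIntegrable 0 T

theorem intervalIntegrable_twistWeight_mul_pdR_A_sq (h : IsGowdySolution T R₀ U A) (R : ℝ) :
    IntervalIntegrable (fun θ => twistWeight U R θ * pdR A R θ ^ 2) volume 0 T :=
  ((h.continuous_twistWeight R).mul ((h.continuous_pdR_A R).pow 2)).intervalIntegrable 0 T

theorem intervalIntegrable_twistWeight_mul_pdT_A_sq (h : IsGowdySolution T R₀ U A) (R : ℝ) :
    IntervalIntegrable (fun θ => twistWeight U R θ * pdT A R θ ^ 2) volume 0 T :=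
  ((h.continuous_twistWeight R).mul ((h.continuous_pdT_A R).pow 2)).intervalIntegrable 0 T

theorem hasDerivAt_gowdyEnergy (h : IsGowdySolution T R₀ U A) (hR : R₀ ≤ R) :
    HasDerivAt (gowdyEnergy T U A) (-(2 / R) * (kineticU T U R + gradientA T U A R)) R := by
  rw [kineticU, gradientA, ← intervalIntegral.integral_add (h.intervalIntegrable_pdR_U_sq R)
    (h.intervalIntegrable_twistWeight_mul_pdT_A_sq R), ← intervalIntegral.integral_const_mul]
  exact hasDerivAt_integral_of_balanceLaw isOpen_Ioi (h.time_pos.trans_le hR)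
    h.contDiffOn_energyDensity (h.contDiff_energyFlux R) (h.energyFlux_period R)
    ((((h.continuous_pdR_U R).pow 2).add
      ((h.continuous_twistWeight R).mul ((h.continuous_pdT_A R).pow 2))).const_mul _)
    (h.hasDerivAt_energyDensity hR)

theorem integral_waveSource (h : IsGowdySolution T R₀ U A) (R : ℝ) :
    ∫ θ in (0 : ℝ)..T, waveSource U A R θ = 2 * (kineticA T U A R - gradientA T U A R) := by
  rw [kineticA, gradientA, ← intervalIntegral.integral_sub
    (h.intervalIntegrable_twistWeight_mul_pdR_A_sq R)
    (h.intervalIntegrable_twistWeight_mul_pdT_A_sq R), ← intervalIntegral.integral_const_mul]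
  simp only [waveSource, mul_sub, mul_assoc]

theorem hasDerivAt_momentum (h : IsGowdySolution T R₀ U A) (hR : R₀ ≤ R) :
    HasDerivAt (momentum T U)
      (2 * (kineticA T U A R - gradientA T U A R) - momentum T U R / R) R := by
  have hU := (h.continuous_pdR_U R).div_const R
  have hsource := h.continuous_waveSource R
  rw [momentum, ← h.integral_waveSource, ← intervalIntegral.integral_div,
    ← intervalIntegral.integral_sub (hsource.intervalIntegrable 0 T) (hU.intervalIntegrable 0 T)]
  exact hasDerivAt_integral_of_balanceLaw isOpen_univ (mem_univ R) h.contDiff_pdR_U.contDiffOn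
    (contDiff_apply_of_uncurry h.contDiff_pdT_U R) (periodic_pdT h.periodic_U R).eq
    (hsource.sub hU) fun θ =>
      (h.hasDerivAt_pdR_U hR θ).congr_deriv (by rw [pdT]; ring)

theorem hasDerivAt_spatialMean (h : IsGowdySolution T R₀ U A) (R : ℝ) :
    HasDerivAt (spatialMean T U) (momentum T U R / T) R := by
  have hmean : spatialMean T U = fun r => (∫ θ in (0 : ℝ)..T, U r θ) / T := by
    funext r
    rw [spatialMean, interval_average_eq_div, sub_zero]
  rw [hmean]
  exact (hasDerivAt_integral_pdR isOpen_univ (mem_univ R)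
    (h.contDiff_U.of_le one_le_two).contDiffOn).div_const T

theorem contDiff_spatialMean (h : IsGowdySolution T R₀ U A) : ContDiff ℝ 1 (spatialMean T U) := by
  have hmomentum : Continuous (momentum T U) := continuous_iff_continuousAt.mpr fun R =>
    (hasDerivAt_integral_pdR isOpen_univ (mem_univ R) h.contDiff_pdR_U.contDiffOn).continuousAt
  have hderiv : deriv (spatialMean T U) = fun R => momentum T U R / T :=
    funext fun R => (h.hasDerivAt_spatialMean R).deriv
  exact contDiff_one_iff_deriv.mpr
    ⟨fun R => (h.hasDerivAt_spatialMean R).differentiableAt, hderiv ▸ hmomentum.div_const T⟩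

theorem hasDerivAt_virialDensity (h : IsGowdySolution T R₀ U A) (hR : R₀ ≤ R) (θ : ℝ) :
    HasDerivAt (fun r => (U r θ - spatialMean T U r) * pdR U r θ)
      (deriv (fun t => (U R t - spatialMean T U R) * pdT U R t) θ
        + (pdR U R θ ^ 2 - pdT U R θ ^ 2 - momentum T U R / T * pdR U R θ
          - (U R θ - spatialMean T U R) * pdR U R θ / R
          + (U R θ - spatialMean T U R) * waveSource U A R θ)) R := by
  have hflux := ((hasDerivAt_pdT h.differentiable_U R θ).sub_const (spatialMean T U R)).fun_mul
    (hasDerivAt_pdT (h.contDiff_pdT_U.differentiable one_ne_zero) R θ)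
  rw [hflux.deriv]
  refine (((hasDerivAt_pdR h.differentiable_U R θ).sub (h.hasDerivAt_spatialMean R)).mul
    (h.hasDerivAt_pdR_U hR θ)).congr_deriv ?_
  simp only [Pi.sub_apply]
  ring

theorem continuous_sub_spatialMean (h : IsGowdySolution T R₀ U A) (R : ℝ) :
    Continuous fun θ => U R θ - spatialMean T U R :=
  (h.continuous_U R).sub continuous_const

theorem integral_virialDensity_source (h : IsGowdySolution T R₀ U A) (R : ℝ) :
    ∫ θ in (0 : ℝ)..T, (pdR U R θ ^ 2 - pdT U R θ ^ 2 - momentum T U R / T * pdR U R θ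
        - (U R θ - spatialMean T U R) * pdR U R θ / R
        + (U R θ - spatialMean T U R) * waveSource U A R θ)
      = kineticU T U R - gradientU T U R - momentum T U R ^ 2 / T - virial T U R / R
        + virialSource T U A R := by
  have hkinetic := h.intervalIntegrable_pdR_U_sq R
  have hgradient := h.intervalIntegrable_pdT_U_sq R
  have hmomentum :=
    ((h.continuous_pdR_U R).const_mul (momentum T U R / T)).intervalIntegrable (μ := volume) 0 T
  have hvirial := (((h.continuous_sub_spatialMean R).fun_mul
    (h.continuous_pdR_U R)).div_const R).intervalIntegrable (μ := volume) 0 T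
  have hsource := ((h.continuous_sub_spatialMean R).fun_mul
    (h.continuous_waveSource R)).intervalIntegrable (μ := volume) 0 T
  rw [intervalIntegral.integral_add (((hkinetic.sub hgradient).sub hmomentum).sub hvirial) hsource,
    intervalIntegral.integral_sub ((hkinetic.sub hgradient).sub hmomentum) hvirial,
    intervalIntegral.integral_sub (hkinetic.sub hgradient) hmomentum,
    intervalIntegral.integral_sub hkinetic hgradient,
    intervalIntegral.integral_const_mul, intervalIntegral.integral_div]
  simp only [kineticU, gradientU, momentum, virial, virialSource]
  ring

theorem hasDerivAt_virial (h : IsGowdySolution T R₀ U A) (hR : R₀ ≤ R) :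
    HasDerivAt (virial T U) (kineticU T U R - gradientU T U R - momentum T U R ^ 2 / T
      - virial T U R / R + virialSource T U A R) R := by
  have hU := h.contDiff_U.of_le one_le_two
  rw [← h.integral_virialDensity_source]
  refine hasDerivAt_integral_of_balanceLaw isOpen_univ (mem_univ R) ?_ ?_ ?_ ?_
    (h.hasDerivAt_virialDensity hR)
  · exact ((hU.sub (h.contDiff_spatialMean.comp contDiff_fst)).mul h.contDiff_pdR_U).contDiffOn
  · exact ((contDiff_apply_of_uncurry hU R).sub contDiff_const).mul
      (contDiff_apply_of_uncurry h.contDiff_pdT_U R)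
  · simp only [(h.periodic_U R).eq, (periodic_pdT h.periodic_U R).eq]
  · have := h.continuous_sub_spatialMean R
    have := h.continuous_pdR_U R
    have := h.continuous_pdT_U R
    have := h.continuous_waveSource R
    fun_prop

theorem gowdyEnergy_eq_add (h : IsGowdySolution T R₀ U A) (R : ℝ) : gowdyEnergy T U A R
    = kineticU T U R + gradientU T U R + (kineticA T U A R + gradientA T U A R) := by
  have hU := h.intervalIntegrable_pdR_U_sq R
  have hU' := h.intervalIntegrable_pdT_U_sq R
  have hA := h.intervalIntegrable_twistWeight_mul_pdR_A_sq R
  have hA' := h.intervalIntegrable_twistWeight_mul_pdT_A_sq R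
  simp only [gowdyEnergy, energyDensity, mul_add]
  rw [intervalIntegral.integral_add (hU.add hU') (hA.add hA'), intervalIntegral.integral_add hU hU',
    intervalIntegral.integral_add hA hA']
  rfl

theorem kineticU_le_gowdyEnergy (h : IsGowdySolution T R₀ U A) (R : ℝ) :
    kineticU T U R ≤ gowdyEnergy T U A R := by
  have hT := h.period_pos.le
  linarith [h.gowdyEnergy_eq_add R, gradientU_nonneg hT U R, kineticA_nonneg hT U A R,
    gradientA_nonneg hT U A R]

theorem gradientU_le_gowdyEnergy (h : IsGowdySolution T R₀ U A) (R : ℝ) :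
    gradientU T U R ≤ gowdyEnergy T U A R := by
  have hT := h.period_pos.le
  linarith [h.gowdyEnergy_eq_add R, kineticU_nonneg hT U R, kineticA_nonneg hT U A R,
    gradientA_nonneg hT U A R]

theorem kineticA_add_gradientA_le_gowdyEnergy (h : IsGowdySolution T R₀ U A) (R : ℝ) :
    kineticA T U A R + gradientA T U A R ≤ gowdyEnergy T U A R := by
  have hT := h.period_pos.le
  linarith [h.gowdyEnergy_eq_add R, kineticU_nonneg hT U R, gradientU_nonneg hT U R]

theorem gowdyEnergy_nonneg (h : IsGowdySolution T R₀ U A) (R : ℝ) : 0 ≤ gowdyEnergy T U A R :=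
  (kineticU_nonneg h.period_pos.le U R).trans (h.kineticU_le_gowdyEnergy R)

theorem gowdyEnergy_le_initial (h : IsGowdySolution T R₀ U A) (hR : R₀ ≤ R) :
    gowdyEnergy T U A R ≤ gowdyEnergy T U A R₀ := by
  refine le_of_hasDerivAt_nonpos (fun r hr => h.hasDerivAt_gowdyEnergy hr) (fun r hr => ?_) hR
  have hr0 : 0 < r := h.time_pos.trans_le hr
  have hT := h.period_pos.le
  exact mul_nonpos_of_nonpos_of_nonneg (neg_nonpos.mpr (by positivity))
    (add_nonneg (kineticU_nonneg hT U r) (gradientA_nonneg hT U A r))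

theorem oscillationBound_le_initial (h : IsGowdySolution T R₀ U A) (hR : R₀ ≤ R) :
    oscillationBound T U A R ≤ oscillationBound T U A R₀ :=
  sqrt_le_sqrt (mul_le_mul_of_nonneg_left (h.gowdyEnergy_le_initial hR) h.period_pos.le)

theorem abs_sub_spatialMean_le (h : IsGowdySolution T R₀ U A) {θ : ℝ} (hθ : θ ∈ Icc 0 T) :
    |U R θ - spatialMean T U R| ≤ oscillationBound T U A R := by
  refine (abs_sub_average_le_sqrt_mul_integral_deriv_sq h.period_pos
    (hasDerivAt_pdT h.differentiable_U R) (h.continuous_pdT_U R) hθ).trans (sqrt_le_sqrt ?_)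
  rw [sub_zero]
  exact mul_le_mul_of_nonneg_left (h.gradientU_le_gowdyEnergy R) h.period_pos.le

theorem integral_abs_pdR_U_le (h : IsGowdySolution T R₀ U A) (R : ℝ) :
    ∫ θ in (0 : ℝ)..T, |pdR U R θ| ≤ oscillationBound T U A R := by
  have hT := h.period_pos.le
  refine (integral_abs_le_sqrt_mul_integral_sq hT (h.continuous_pdR_U R)).trans (sqrt_le_sqrt ?_)
  rw [sub_zero]
  exact mul_le_mul_of_nonneg_left (h.kineticU_le_gowdyEnergy R) hT

theorem abs_momentum_le (h : IsGowdySolution T R₀ U A) (R : ℝ) :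
    |momentum T U R| ≤ oscillationBound T U A R :=
  (intervalIntegral.abs_integral_le_integral_abs h.period_pos.le).trans (h.integral_abs_pdR_U_le R)

theorem abs_virial_le (h : IsGowdySolution T R₀ U A) (R : ℝ) :
    |virial T U R| ≤ oscillationBound T U A R * oscillationBound T U A R :=
  (abs_integral_mul_le h.period_pos.le (fun _ hθ => h.abs_sub_spatialMean_le hθ)
    (h.continuous_pdR_U R)).trans
    (mul_le_mul_of_nonneg_left (h.integral_abs_pdR_U_le R) (sqrt_nonneg _))

theorem abs_correctedVirial_le (h : IsGowdySolution T R₀ U A) {c : ℝ} (hc : 0 ≤ c) (R : ℝ) :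
    |correctedVirial T U c R| ≤ (oscillationBound T U A R + c) * oscillationBound T U A R := by
  calc |correctedVirial T U c R| ≤ |virial T U R| + c * |momentum T U R| := by
        rw [← abs_of_nonneg hc, ← abs_mul, abs_of_nonneg hc]
        exact abs_sub _ _
    _ ≤ oscillationBound T U A R * oscillationBound T U A R + c * oscillationBound T U A R := by
        gcongr
        exacts [h.abs_virial_le R, h.abs_momentum_le R]
    _ = (oscillationBound T U A R + c) * oscillationBound T U A R := by ring

theorem abs_correctedVirial_le_initial (h : IsGowdySolution T R₀ U A) {c : ℝ} (hc : 0 ≤ c)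
    (hR : R₀ ≤ R) : |correctedVirial T U c R|
      ≤ (oscillationBound T U A R₀ + c) * oscillationBound T U A R₀ := by
  have hosc := h.oscillationBound_le_initial hR
  have hosc₀ : 0 ≤ oscillationBound T U A R := sqrt_nonneg _
  exact (h.abs_correctedVirial_le hc R).trans (by gcongr; linarith)

theorem integral_abs_waveSource_le (h : IsGowdySolution T R₀ U A) (R : ℝ) :
    ∫ θ in (0 : ℝ)..T, |waveSource U A R θ| ≤ 2 * (kineticA T U A R + gradientA T U A R) := by
  have hA := h.intervalIntegrable_twistWeight_mul_pdR_A_sq R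
  have hA' := h.intervalIntegrable_twistWeight_mul_pdT_A_sq R
  rw [kineticA, gradientA, ← intervalIntegral.integral_add hA hA',
    ← intervalIntegral.integral_const_mul]
  refine intervalIntegral.integral_mono_on h.period_pos.le
    ((h.continuous_waveSource R).abs.intervalIntegrable 0 T) ((hA.add hA').const_mul 2)
    fun θ _ => ?_
  have hweight : 0 ≤ 2 * twistWeight U R θ := mul_nonneg two_pos.le (twistWeight_nonneg U R θ)
  rw [waveSource, abs_mul, abs_of_nonneg hweight, ← mul_add, ← mul_assoc]
  refine mul_le_mul_of_nonneg_left ?_ hweight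
  exact (abs_sub _ _).trans_eq (by rw [abs_sq, abs_sq])

theorem abs_virialSource_le (h : IsGowdySolution T R₀ U A) (R : ℝ) : |virialSource T U A R|
    ≤ oscillationBound T U A R * (2 * (kineticA T U A R + gradientA T U A R)) :=
  (abs_integral_mul_le h.period_pos.le (fun _ hθ => h.abs_sub_spatialMean_le hθ)
    (h.continuous_waveSource R)).trans
    (mul_le_mul_of_nonneg_left (h.integral_abs_waveSource_le R) (sqrt_nonneg _))

theorem hasDerivAt_correctedVirial (h : IsGowdySolution T R₀ U A) (c : ℝ) (hR : R₀ ≤ R) :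
    HasDerivAt (correctedVirial T U c) (kineticU T U R - gradientU T U R + virialSource T U A R
      - 2 * c * (kineticA T U A R - gradientA T U A R) - momentum T U R ^ 2 / T
      - correctedVirial T U c R / R) R := by
  refine ((h.hasDerivAt_virial hR).sub ((h.hasDerivAt_momentum hR).const_mul c)).congr_deriv ?_
  rw [correctedVirial]
  ring

theorem equidistribution_le_dissipation (h : IsGowdySolution T R₀ U A) (hR : R₀ ≤ R) :
    kineticU T U R - gradientU T U R + virialSource T U A R
      - 2 * (oscillationBound T U A R₀ + 1 / 2) * (kineticA T U A R - gradientA T U A R)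
      ≤ 2 * (2 * oscillationBound T U A R₀ + 2) * (kineticU T U R + gradientA T U A R)
        - gowdyEnergy T U A R := by
  have hT := h.period_pos.le
  have hkU := kineticU_nonneg hT U R
  have hkA := kineticA_nonneg hT U A R
  have hgA := gradientA_nonneg hT U A R
  have hosc₀ : 0 ≤ oscillationBound T U A R₀ := sqrt_nonneg _
  have hsource : virialSource T U A R
      ≤ oscillationBound T U A R₀ * (2 * (kineticA T U A R + gradientA T U A R)) :=
    (le_abs_self _).trans <| (h.abs_virialSource_le R).trans <|
      mul_le_mul_of_nonneg_right (h.oscillationBound_le_initial hR) (by positivity)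
  rw [h.gowdyEnergy_eq_add]
  linarith [mul_nonneg hosc₀ hkU]

theorem deriv_gowdyEnergy_add_deriv_correctedVirial_le (h : IsGowdySolution T R₀ U A)
    (hR : R₀ ≤ R) :
    (2 * oscillationBound T U A R₀ + 2) * deriv (gowdyEnergy T U A) R
        + deriv (correctedVirial T U (oscillationBound T U A R₀ + 1 / 2)) R / R
      ≤ -gowdyEnergy T U A R / R
        + (oscillationBound T U A R₀ + (oscillationBound T U A R₀ + 1 / 2))
          * oscillationBound T U A R₀ / R ^ 2 := by
  have hR0 : 0 < R := h.time_pos.trans_le hR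
  have hosc : 0 ≤ oscillationBound T U A R₀ := sqrt_nonneg _
  have hmomentum : 0 ≤ momentum T U R ^ 2 / T := div_nonneg (sq_nonneg _) h.period_pos.le
  have hV := (abs_le.mp (h.abs_correctedVirial_le_initial
    (c := oscillationBound T U A R₀ + 1 / 2) (by positivity) hR)).1
  have hequi := h.equidistribution_le_dissipation hR
  rw [(h.hasDerivAt_gowdyEnergy hR).deriv, (h.hasDerivAt_correctedVirial _ hR).deriv]
  set V := correctedVirial T U (oscillationBound T U A R₀ + 1 / 2) R
  set D := kineticU T U R - gradientU T U R + virialSource T U A R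
    - 2 * (oscillationBound T U A R₀ + 1 / 2) * (kineticA T U A R - gradientA T U A R)
  calc (2 * oscillationBound T U A R₀ + 2) * (-(2 / R) * (kineticU T U R + gradientA T U A R))
        + (D - momentum T U R ^ 2 / T - V / R) / R
      = (D - 2 * (2 * oscillationBound T U A R₀ + 2) * (kineticU T U R + gradientA T U A R)
        - momentum T U R ^ 2 / T) / R + -V / R ^ 2 := by ring
    _ ≤ _ := by gcongr <;> linarith

theorem exists_gowdyEnergy_le_rpow (h : IsGowdySolution T R₀ U A) :
    ∃ δ K, 0 < δ ∧ ∀ R, R₀ ≤ R → gowdyEnergy T U A R ≤ K * R ^ (-δ : ℝ) := by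
  have hosc : 0 ≤ oscillationBound T U A R₀ := sqrt_nonneg _
  set b := 2 * oscillationBound T U A R₀ + 2
  have hb : 0 < b := by positivity
  obtain ⟨K, hK⟩ := exists_le_mul_rpow_of_hasDerivAt_corrected (δ := 1 / b)
    (f := fun R => b * gowdyEnergy T U A R) h.time_pos
    (one_div_le_one_div_of_le two_pos (by linarith))
    (fun R hR => (h.hasDerivAt_gowdyEnergy hR).differentiableAt.hasDerivAt.const_mul b)
    (fun R hR => (h.hasDerivAt_correctedVirial _ hR).differentiableAt.hasDerivAt)
    (fun R hR => h.abs_correctedVirial_le_initial (by positivity) hR)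
    (fun R hR => (h.deriv_gowdyEnergy_add_deriv_correctedVirial_le hR).trans_eq
      (by field_simp))
  refine ⟨1 / b, K / b, one_div_pos.mpr hb, fun R hR => ?_⟩
  rw [div_mul_eq_mul_div, le_div_iff₀' hb]
  exact hK R hR

theorem hasDerivAt_decayFunctional (h : IsGowdySolution T R₀ U A) (hR : R₀ ≤ R) :
    HasDerivAt (decayFunctional T R₀ U A)
      (virialSource T U A R - momentum T U R ^ 2 / T - correctedVirial T U (1 / 2) R / R) R := by
  have hR0 : R ≠ 0 := (h.time_pos.trans_le hR).ne'
  refine ((((hasDerivAt_id' R).mul (h.hasDerivAt_gowdyEnergy hR)).add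
    (h.hasDerivAt_correctedVirial (1 / 2) hR)).add_const _).congr_deriv ?_
  rw [h.gowdyEnergy_eq_add]
  field_simp
  ring

theorem mul_gowdyEnergy_add_le_decayFunctional (h : IsGowdySolution T R₀ U A) (hR : R₀ ≤ R) :
    R * gowdyEnergy T U A R + (oscillationBound T U A R₀ + 1 / 2)
      ≤ decayFunctional T R₀ U A R := by
  have hV := (abs_le.mp (h.abs_correctedVirial_le_initial one_half_pos.le hR)).1
  rw [decayFunctional]
  linarith

theorem mul_gowdyEnergy_lt_decayFunctional (h : IsGowdySolution T R₀ U A) (hR : R₀ ≤ R) :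
    R * gowdyEnergy T U A R < decayFunctional T R₀ U A R := by
  have hosc : 0 ≤ oscillationBound T U A R₀ := sqrt_nonneg _
  linarith [h.mul_gowdyEnergy_add_le_decayFunctional hR]

theorem decayFunctional_pos (h : IsGowdySolution T R₀ U A) (hR : R₀ ≤ R) :
    0 < decayFunctional T R₀ U A R :=
  (mul_nonneg (h.time_pos.le.trans hR) (h.gowdyEnergy_nonneg R)).trans_lt
    (h.mul_gowdyEnergy_lt_decayFunctional hR)

theorem deriv_decayFunctional_le (h : IsGowdySolution T R₀ U A) (hR : R₀ ≤ R) :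
    deriv (decayFunctional T R₀ U A) R
      ≤ 2 * (oscillationBound T U A R / R) * decayFunctional T R₀ U A R := by
  have hR0 : 0 < R := h.time_pos.trans_le hR
  have hosc : 0 ≤ oscillationBound T U A R := sqrt_nonneg _
  have hosc₀ : 0 ≤ oscillationBound T U A R₀ := sqrt_nonneg _
  have hmomentum : 0 ≤ momentum T U R ^ 2 / T := div_nonneg (sq_nonneg _) h.period_pos.le
  have hsource : virialSource T U A R ≤ oscillationBound T U A R * (2 * gowdyEnergy T U A R) :=
    (le_abs_self _).trans <| (h.abs_virialSource_le R).trans <| by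
      gcongr
      exact h.kineticA_add_gradientA_le_gowdyEnergy R
  have hvirial : -correctedVirial T U (1 / 2) R
      ≤ (oscillationBound T U A R₀ + 1 / 2) * oscillationBound T U A R :=
    (neg_le_abs _).trans <| (h.abs_correctedVirial_le one_half_pos.le R).trans <| by
      gcongr
      exact h.oscillationBound_le_initial hR
  rw [(h.hasDerivAt_decayFunctional hR).deriv]
  calc virialSource T U A R - momentum T U R ^ 2 / T - correctedVirial T U (1 / 2) R / R
      ≤ virialSource T U A R + -correctedVirial T U (1 / 2) R / R := by
        rw [neg_div]
        linarith
    _ ≤ oscillationBound T U A R * (2 * gowdyEnergy T U A R)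
        + (oscillationBound T U A R₀ + 1 / 2) * oscillationBound T U A R / R := by gcongr
    _ = oscillationBound T U A R / R
        * (2 * (R * gowdyEnergy T U A R) + (oscillationBound T U A R₀ + 1 / 2)) := by
        field_simp
    _ ≤ oscillationBound T U A R / R * (2 * decayFunctional T R₀ U A R) := by
        gcongr
        linarith [h.mul_gowdyEnergy_add_le_decayFunctional hR]
    _ = 2 * (oscillationBound T U A R / R) * decayFunctional T R₀ U A R := by ring

theorem exists_oscillationBound_le_rpow (h : IsGowdySolution T R₀ U A) :
    ∃ ε C, 0 < ε ∧ 0 ≤ C ∧ ∀ R, R₀ ≤ R → oscillationBound T U A R ≤ C * R ^ (-ε : ℝ) := by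
  obtain ⟨δ, K, hδ, hE⟩ := h.exists_gowdyEnergy_le_rpow
  refine ⟨δ / 2, √(T * K), half_pos hδ, sqrt_nonneg _, fun R hR => ?_⟩
  have hR0 : 0 < R := h.time_pos.trans_le hR
  have hT := h.period_pos
  calc oscillationBound T U A R ≤ √(T * (K * R ^ (-δ))) :=
        sqrt_le_sqrt (mul_le_mul_of_nonneg_left (hE R hR) hT.le)
    _ = √(T * K) * R ^ (-(δ / 2)) := by
        rw [← mul_assoc, sqrt_mul' _ (rpow_nonneg hR0.le _), sqrt_eq_rpow (R ^ (-δ)),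
          ← rpow_mul hR0.le]
        ring_nf

theorem exists_decayFunctional_le (h : IsGowdySolution T R₀ U A) :
    ∃ K, ∀ R, R₀ ≤ R → decayFunctional T R₀ U A R ≤ K := by
  obtain ⟨ε, C, hε, hC, hosc⟩ := h.exists_oscillationBound_le_rpow
  refine ⟨_, fun R hR => le_mul_exp_of_hasDerivAt_le_rpow (c := 2 * C) h.time_pos (by positivity) hε
    (h.decayFunctional_pos le_rfl).le
    (fun R hR => (h.hasDerivAt_decayFunctional hR).differentiableAt.hasDerivAt) (fun R hR => ?_) hR⟩
  have hR0 : 0 < R := h.time_pos.trans_le hR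
  have hpos := h.decayFunctional_pos hR
  calc deriv (decayFunctional T R₀ U A) R
      ≤ 2 * (oscillationBound T U A R / R) * decayFunctional T R₀ U A R :=
        h.deriv_decayFunctional_le hR
    _ ≤ 2 * (C * R ^ (-ε) / R) * decayFunctional T R₀ U A R := by
        gcongr
        exact hosc R hR
    _ = 2 * C * R ^ (-ε - 1) * decayFunctional T R₀ U A R := by
        rw [rpow_sub_one hR0.ne']
        ring

end IsGowdySolution

theorem stmt9_general {T R₀ : ℝ} {U A : ℝ → ℝ → ℝ} (h : IsGowdySolution T R₀ U A) :
    ∃ K, 0 < K ∧ ∀ R, R₀ ≤ R → gowdyEnergy T U A R ≤ K / R := by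
  obtain ⟨K, hK⟩ := h.exists_decayFunctional_le
  refine ⟨K, (h.decayFunctional_pos le_rfl).trans_le (hK R₀ le_rfl), fun R hR => ?_⟩
  rw [le_div_iff₀' (h.time_pos.trans_le hR)]
  exact (h.mul_gowdyEnergy_lt_decayFunctional hR).le.trans (hK R hR)

theorem stmt9
    (R₀ : ℝ) (hR₀ : 0 < R₀)
    (U A : ℝ → ℝ → ℝ)
    (hU : ContDiff ℝ (⊤ : ℕ∞) (Function.uncurry U))
    (hA : ContDiff ℝ (⊤ : ℕ∞) (Function.uncurry A))
    (hUper : ∀ R θ, U R (θ + 2 * π) = U R θ)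
    (hAper : ∀ R θ, A R (θ + 2 * π) = A R θ)
    (eqU : ∀ R, R₀ ≤ R → ∀ θ : ℝ,
      deriv (fun r => r * pdR U r θ) R - deriv (fun t => R * pdT U R t) θ
        = exp (4 * U R θ) / (2 * R) * ((pdR A R θ) ^ 2 - (pdT A R θ) ^ 2))
    (eqA : ∀ R, R₀ ≤ R → ∀ θ : ℝ,
      deriv (fun r => r⁻¹ * pdR A r θ) R - deriv (fun t => R⁻¹ * pdT A R t) θ
        = 4 / R * (-(pdR U R θ * pdR A R θ) + pdT U R θ * pdT A R θ))
    (E : ℝ → ℝ)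
    (hE : ∀ R, E R = ∫ θ in (0:ℝ)..(2 * π),
      (pdR U R θ) ^ 2 + (pdT U R θ) ^ 2
        + exp (4 * U R θ) / (4 * R ^ 2) * ((pdR A R θ) ^ 2 + (pdT A R θ) ^ 2))
 :
    ∃ K : ℝ, 0 < K ∧ ∀ R, R₀ ≤ R → E R ≤ K / R := by
  have h : IsGowdySolution (2 * π) R₀ U A := ⟨two_pi_pos, hR₀, contDiff_infty.mp hU 2,
    contDiff_infty.mp hA 2, hUper, hAper, eqU, eqA⟩
  exact funext hE ▸ stmt9_general h
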